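/- Let w = l_1 ⋯ l_n be a word in the letters u_1^{±1}, ..., u_N^{±1} whose cyclic reduction has length k ≥ 1, and let π be the unique w-admissible non-crossing half-pairing on [n]. Then a cyclic permutation l_i l_{i+1} ⋯ l_n l_1 ⋯ l_{i-1} of w has good reduction if and only if {i} is a through string (singleton block) of π. In particular, if w itself has good reduction then {1} is a through string of π. -/

import Mathlib

namespace NCC

/-- A letter `u_i^{±1}`: a generator index together with a sign. -/
abbrev Letter (N : ℕ) := Fin N × Bool

/-- The inverse of a letter. -/
def linv {N : ℕ} (l : Letter N) : Letter N := (l.1, !l.2)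

/-- One cyclic reduction step: either a linear reduction step (removal of two
adjacent letters which are inverses of each other), or removal of the first and
last letters when they are inverses of each other. -/
def CyclicStep {N : ℕ} (w w' : List (Letter N)) : Prop :=
  FreeGroup.Red.Step w w' ∨
    ∃ (l : Letter N) (m : List (Letter N)), w = l :: (m ++ [linv l]) ∧ w' = m

/-- `w` reduces cyclically (in zero or more steps) to `v`. -/
def CycReducesTo {N : ℕ} (w v : List (Letter N)) : Prop :=
  Relation.ReflTransGen CyclicStep w v

/-- A word is linearly reduced when no two adjacent letters are inverses of
each other. -/
def LinReduced {N : ℕ} (w : List (Letter N)) : Prop :=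
  List.Chain' (fun a b => b ≠ linv a) w

/-- A word is cyclically reduced iff `w ++ w` is linearly reduced, i.e. it is
linearly reduced and its last letter is not the inverse of its first letter. -/
def CycReduced {N : ℕ} (w : List (Letter N)) : Prop :=
  LinReduced (w ++ w)

/-- A word is reducible to 1 if it linearly reduces to the empty word. -/
def ReducibleToOne {N : ℕ} (w : List (Letter N)) : Prop :=
  FreeGroup.Red w []

/-- A word has good reduction: no nonempty prefix is reducible to 1, and its
linear reduction is cyclically reduced. -/
def GoodReduction {N : ℕ} (w : List (Letter N)) : Prop :=
  (∀ s, s <+: w → s ≠ [] → ¬ ReducibleToOne s) ∧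
    CycReduced (FreeGroup.reduce w)

/-- The first `i` letters of the infinite word `w_∞ = w w w ⋯`. -/
def infTake {N : ℕ} (w : List (Letter N)) (i : ℕ) : List (Letter N) :=
  ((List.replicate i w).flatten).take i

open scoped Classical

/-- `i` and `j` lie in a common block of the partition `P`. -/
def Rel {n : ℕ} (P : Finpartition (Finset.univ : Finset (Fin n))) (i j : Fin n) : Prop :=
  ∃ B ∈ P.parts, i ∈ B ∧ j ∈ B

/-- `i` lies in a singleton block of `P`. -/
def IsSingleton {n : ℕ} (P : Finpartition (Finset.univ : Finset (Fin n))) (i : Fin n) : Prop :=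
  ∃ B ∈ P.parts, i ∈ B ∧ B.card = 1

/-- The relation of the partition `π̃` obtained from `P` by merging all
singleton blocks into a single block. -/
def RelTilde {n : ℕ} (P : Finpartition (Finset.univ : Finset (Fin n))) (i j : Fin n) : Prop :=
  Rel P i j ∨ (IsSingleton P i ∧ IsSingleton P j)

/-- An equivalence-like relation on `[n]` is non-crossing when there are no
`i₁ < i₂ < i₃ < i₄` with `i₁ ∼ i₃`, `i₂ ∼ i₄` but `i₁ ≁ i₂`. -/
def NonCrossingRel {n : ℕ} (r : Fin n → Fin n → Prop) : Prop :=
  ∀ i1 i2 i3 i4 : Fin n, i1 < i2 → i2 < i3 → i3 < i4 → r i1 i3 → r i2 i4 → r i1 i2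

/-- A non-crossing half-pairing on `[n]`: a non-crossing partition all of whose
blocks have at most two elements, with at least one singleton block (through
string), such that merging all singleton blocks still gives a non-crossing
partition. -/
structure HalfPairing (n : ℕ) where
  P : Finpartition (Finset.univ : Finset (Fin n))
  card_le : ∀ B ∈ P.parts, B.card ≤ 2
  exists_singleton : ∃ i, IsSingleton P i
  nc : NonCrossingRel (Rel P)
  nc_tilde : NonCrossingRel (RelTilde P)

/-- `r` and `s` form a pair (a two-element block) of `π`. -/
def Pairs {n : ℕ} (π : HalfPairing n) (r s : Fin n) : Prop :=
  r ≠ s ∧ Rel π.P r s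

/-- Membership in the cyclic interval `[i, j]` (going clockwise from `i` to
`j`, endpoints included). -/
def InCyc {n : ℕ} (i j x : Fin n) : Prop :=
  (x.val + n - i.val) % n ≤ (j.val + n - i.val) % n

/-- Cyclic successor of `i` in `[n]`. -/
def cnext {n : ℕ} (i : Fin n) : Fin n :=
  ⟨(i.val + 1) % n, Nat.mod_lt _ i.pos⟩

/-- Cyclic predecessor of `i` in `[n]`. -/
def cprev {n : ℕ} (i : Fin n) : Fin n :=
  ⟨(i.val + n - 1) % n, Nat.mod_lt _ i.pos⟩

/-- `a + j` modulo `n`. -/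
def cadd {n : ℕ} (a j : Fin n) : Fin n :=
  ⟨(a.val + j.val) % n, Nat.mod_lt _ a.pos⟩

/-- `x - a` modulo `n`. -/
def csub {n : ℕ} (x a : Fin n) : Fin n :=
  ⟨(x.val + n - a.val) % n, Nat.mod_lt _ a.pos⟩

/-- `i` has the outward orientation: it is a singleton, or it is the point of a
pair `(i, s)` such that the cyclic interval `[i, s]` contains no singleton. -/
def OutOriented {n : ℕ} (π : HalfPairing n) (i : Fin n) : Prop :=
  IsSingleton π.P i ∨
    ∃ s, Pairs π i s ∧ ∀ x, InCyc i s x → ¬ IsSingleton π.P x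

/-- `i` covers `j`: both are outward oriented, and either `j` is the cyclic
successor of `i`, or `π` pairs each point of the cyclic interval
`[i+1, j-1]` with another point of `[i+1, j-1]`. -/
def Covers {n : ℕ} (π : HalfPairing n) (i j : Fin n) : Prop :=
  OutOriented π i ∧ OutOriented π j ∧
    (j = cnext i ∨
      ∀ x, InCyc (cnext i) (cprev j) x →
        ∃ y, y ≠ x ∧ InCyc (cnext i) (cprev j) y ∧ Pairs π x y)

/-- The set of through strings (singleton blocks) of `π`. -/
noncomputable def throughFinset {n : ℕ} (π : HalfPairing n) : Finset (Fin n) :=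
  Finset.univ.filter (fun i => IsSingleton π.P i)

/-- The word formed by the letters of `w` at the through strings of `π`,
read in increasing order of position. -/
noncomputable def throughWord {n N : ℕ} (w : Fin n → Letter N) (π : HalfPairing n) :
    List (Letter N) :=
  ((throughFinset π).sort (· ≤ ·)).map w

/-- `π` is a `w`-pairing: paired positions carry mutually inverse letters, and
the through-string letters, read in order, form a cyclic reduction of `w`. -/
def IsWPairing {n N : ℕ} (w : Fin n → Letter N) (π : HalfPairing n) : Prop :=
  (∀ r s, Pairs π r s → w r = linv (w s)) ∧
    CycReducesTo (List.ofFn w) (throughWord w π) ∧ CycReduced (throughWord w π)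

/-- `π` is `w`-admissible: it is a `w`-pairing and `l_i ≠ l_j⁻¹` whenever
`i` covers `j`. -/
def Admissible {n N : ℕ} (w : Fin n → Letter N) (π : HalfPairing n) : Prop :=
  IsWPairing w π ∧ ∀ i j, Covers π i j → w i ≠ linv (w j)

/-!
A word traces a walk in the Cayley tree of the free group. Cut the circle open at a through string
and read `π` from there. The points not yet closed form a stack; by admissibility the letter at the
top of the stack does not cancel the next letter that is pushed, because the top covers it. Hence
the stack always spells the reduction of the prefix read so far. As the through string stays at the
bottom, no prefix is trivial, and since the top of the final stack covers the through string around
the circle, the reduction is cyclically reduced.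

Conversely, let `j` be paired with `s`. If `j` is the left end, the factor from `j` to `s` is a
trivial prefix of the rotation starting at `j`. If `j` is the right end, write `U V` for the word
read from the through string, with `V` starting at `j`. If both `U V` and `V U` have good reduction,
then `U * (V U) = (U V) * U` forces both conjugates to have the same norm and
`reduce U ++ reduce (V U)` to be reduced. But `reduce U` ends with the letter of `s`, while
`reduce (V U)` starts with the letter of `j`, its inverse.
-/

/-! ### Walks in the Cayley tree -/

section Walk

variable {α : Type*}

/-- The walk in the Cayley tree of the free group traced by the word `W` does not come back to its
starting point. -/
def NeverReturns (W : List (α × Bool)) : Prop :=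
  ∀ s, s <+: W → s ≠ [] → FreeGroup.mk s ≠ 1

theorem NeverReturns.of_isPrefix {V W : List (α × Bool)} (hW : NeverReturns W) (h : V <+: W) :
    NeverReturns V :=
  fun s hs => hW s (hs.trans h)

theorem mk_cons_inv_cons (x : α × Bool) (W : List (α × Bool)) :
    FreeGroup.mk (x :: (x.1, !x.2) :: W) = FreeGroup.mk W :=
  Quot.sound FreeGroup.Red.Step.cons_not

variable [DecidableEq α]

theorem isReduced_reduce (W : List (α × Bool)) : FreeGroup.IsReduced (FreeGroup.reduce W) :=
  FreeGroup.isReduced_iff_reduce_eq.2 FreeGroup.reduce.idem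

theorem reduce_cons_eq_or (x : α × Bool) (W : List (α × Bool)) :
    FreeGroup.reduce (x :: W) = x :: FreeGroup.reduce W ∨
      FreeGroup.reduce W = (x.1, !x.2) :: FreeGroup.reduce (x :: W) := by
  rw [FreeGroup.reduce.cons]
  rcases FreeGroup.reduce W with _ | ⟨y, R⟩
  · exact Or.inl rfl
  · dsimp only
    split_ifs with h
    · exact Or.inr (by simp [h])
    · exact Or.inl rfl

/-- In a tree, a walk visits every vertex of the geodesic between its endpoints. -/
theorem exists_prefix_mk_eq {W p : List (α × Bool)} (hp : p <+: FreeGroup.reduce W) :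
    ∃ s, s <+: W ∧ FreeGroup.mk s = FreeGroup.mk p := by
  induction W generalizing p with
  | nil => exact ⟨p, hp, rfl⟩
  | cons x W ih =>
    have cons_visited {p' : List (α × Bool)} (hp' : p' <+: FreeGroup.reduce W) :
        ∃ s, s <+: x :: W ∧ FreeGroup.mk s = FreeGroup.mk (x :: p') := by
      obtain ⟨s, hs, hsp⟩ := ih hp'
      refine ⟨x :: s, List.cons_prefix_cons.2 ⟨rfl, hs⟩, ?_⟩
      rw [← List.singleton_append, ← FreeGroup.mul_mk, hsp, FreeGroup.mul_mk,
        List.singleton_append]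
    rcases reduce_cons_eq_or x W with hpush | hpop
    · rw [hpush, List.prefix_cons_iff] at hp
      rcases hp with rfl | ⟨p', rfl, hp'⟩
      · exact ⟨[], List.nil_prefix, rfl⟩
      · exact cons_visited hp'
    · rw [← mk_cons_inv_cons x p]
      exact cons_visited (hpop ▸ List.cons_prefix_cons.2 ⟨rfl, hp⟩)

theorem NeverReturns.head?_reduce {W : List (α × Bool)} (hW : NeverReturns W) :
    (FreeGroup.reduce W).head? = W.head? := by
  rcases W with _ | ⟨x, W⟩
  · rfl
  rcases reduce_cons_eq_or x W with hpush | hpop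
  · rw [hpush, List.head?_cons, List.head?_cons]
  · have hinv : [(x.1, !x.2)] <+: FreeGroup.reduce W :=
      hpop ▸ List.cons_prefix_cons.2 ⟨rfl, List.nil_prefix⟩
    obtain ⟨s, hs, hsx⟩ := exists_prefix_mk_eq hinv
    refine absurd ?_ (hW (x :: s) (List.cons_prefix_cons.2 ⟨rfl, hs⟩) (List.cons_ne_nil x s))
    rw [← List.singleton_append, ← FreeGroup.mul_mk, hsx, FreeGroup.mul_mk]
    exact mk_cons_inv_cons x []

theorem isReduced_toWord_append_iff {x y : FreeGroup α} :
    FreeGroup.IsReduced (x.toWord ++ y.toWord) ↔ (x * y).norm = x.norm + y.norm := by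
  rw [FreeGroup.norm, FreeGroup.norm, FreeGroup.norm, ← List.length_append]
  constructor
  · intro h
    rw [FreeGroup.toWord_mul, h.reduce_eq]
  · intro h
    rw [← (FreeGroup.toWord_mul_sublist x y).eq_of_length h]
    exact FreeGroup.isReduced_toWord

/-- Both factors start with the first letter of `U`. -/
theorem norm_mk_append_mul_mk {U V : List (α × Bool)} (hUV : NeverReturns (U ++ V))
    (hcyc : FreeGroup.IsCyclicallyReduced (FreeGroup.reduce (U ++ V))) :
    (FreeGroup.mk (U ++ V) * FreeGroup.mk U).norm =
      (FreeGroup.mk (U ++ V)).norm + (FreeGroup.mk U).norm := by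
  rw [← isReduced_toWord_append_iff, FreeGroup.toWord_mk, FreeGroup.toWord_mk]
  refine (isReduced_reduce _).append (isReduced_reduce _) fun a ha b hb => ?_
  rw [(hUV.of_isPrefix (List.prefix_append U V)).head?_reduce] at hb
  refine hcyc.2 a ha b ?_
  rw [hUV.head?_reduce]
  exact List.mem_head?_append_of_mem_head? hb

theorem norm_mk_append_le {U V : List (α × Bool)} (hUV : NeverReturns (U ++ V))
    (hcyc : FreeGroup.IsCyclicallyReduced (FreeGroup.reduce (U ++ V))) :
    (FreeGroup.mk (U ++ V)).norm ≤ (FreeGroup.mk (V ++ U)).norm := by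
  have hle := FreeGroup.norm_mul_le (FreeGroup.mk U) (FreeGroup.mk (V ++ U))
  have hconj : FreeGroup.mk U * FreeGroup.mk (V ++ U) = FreeGroup.mk (U ++ V) * FreeGroup.mk U := by
    simp only [FreeGroup.mul_mk, List.append_assoc]
  rw [hconj, norm_mk_append_mul_mk hUV hcyc] at hle
  omega

theorem isReduced_reduce_append_reduce_rotate {U V : List (α × Bool)}
    (hUV : NeverReturns (U ++ V)) (hVU : NeverReturns (V ++ U))
    (hcyc : FreeGroup.IsCyclicallyReduced (FreeGroup.reduce (U ++ V)))
    (hcyc' : FreeGroup.IsCyclicallyReduced (FreeGroup.reduce (V ++ U))) :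
    FreeGroup.IsReduced (FreeGroup.reduce U ++ FreeGroup.reduce (V ++ U)) := by
  have hnorm := le_antisymm (norm_mk_append_le hUV hcyc) (norm_mk_append_le hVU hcyc')
  rw [← FreeGroup.toWord_mk, ← FreeGroup.toWord_mk, isReduced_toWord_append_iff]
  calc (FreeGroup.mk U * FreeGroup.mk (V ++ U)).norm
      = (FreeGroup.mk (U ++ V) * FreeGroup.mk U).norm := by
        simp only [FreeGroup.mul_mk, List.append_assoc]
    _ = (FreeGroup.mk U).norm + (FreeGroup.mk (V ++ U)).norm := by
        rw [norm_mk_append_mul_mk hUV hcyc, hnorm, add_comm]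

end Walk

section Letter

variable {N : ℕ}

theorem ne_linv_iff {a b : Letter N} : b ≠ linv a ↔ (a.1 = b.1 → a.2 = b.2) := by
  simp only [linv, ne_eq, Prod.ext_iff, not_and, Bool.not_eq_not, eq_comm]

theorem linv_linv (a : Letter N) : linv (linv a) = a := by
  simp only [linv, Bool.not_not]

theorem mk_singleton_linv (a : Letter N) :
    FreeGroup.mk [linv a] = (FreeGroup.mk [a])⁻¹ :=
  (FreeGroup.inv_mk (L := [a])).symm

theorem linReduced_iff {W : List (Letter N)} : LinReduced W ↔ FreeGroup.IsReduced W := by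
  unfold LinReduced FreeGroup.IsReduced
  simp only [ne_linv_iff]
  exact Iff.rfl

theorem cycReduced_iff {W : List (Letter N)} :
    CycReduced W ↔ FreeGroup.IsCyclicallyReduced W := by
  rw [CycReduced, linReduced_iff]
  exact List.isChain_append.trans ⟨And.right, fun h => ⟨h.1, h⟩⟩

theorem reducibleToOne_iff {W : List (Letter N)} : ReducibleToOne W ↔ FreeGroup.mk W = 1 := by
  rw [← FreeGroup.toWord_eq_nil_iff, FreeGroup.toWord_mk]
  constructor
  · intro h
    rw [FreeGroup.reduce.eq_of_red h, FreeGroup.reduce_nil]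
  · intro h
    rw [ReducibleToOne, ← h]
    exact FreeGroup.reduce.red

theorem goodReduction_iff {W : List (Letter N)} :
    GoodReduction W ↔
      NeverReturns W ∧ FreeGroup.IsCyclicallyReduced (FreeGroup.reduce W) := by
  simp only [GoodReduction, NeverReturns, reducibleToOne_iff, cycReduced_iff, ne_eq]

end Letter

/-! ### Nested matchings of the positions of a word -/

section Subword

variable {α : Type*} (L : ℕ → α)

/-- The factor `L s, …, L (t - 1)` of the infinite word `L`. -/
def subword (s t : ℕ) : List α :=
  (List.Ico s t).map L

theorem subword_self (s : ℕ) : subword L s s = [] := by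
  rw [subword, List.Ico.self_empty, List.map_nil]

theorem subword_succ {s t : ℕ} (h : s ≤ t) : subword L s (t + 1) = subword L s t ++ [L t] := by
  rw [subword, List.Ico.succ_top h, List.map_append, List.map_singleton, subword]

theorem subword_eq_cons {s t : ℕ} (h : s < t) : subword L s t = L s :: subword L (s + 1) t := by
  rw [subword, List.Ico.eq_cons h, List.map_cons, subword]

theorem subword_append {r s t : ℕ} (hrs : r ≤ s) (hst : s ≤ t) :
    subword L r s ++ subword L s t = subword L r t := by
  rw [subword, subword, ← List.map_append, List.Ico.append_consecutive hrs hst, subword]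

theorem exists_eq_subword_of_isPrefix {n : ℕ} {p : List α} (hp : p <+: subword L 0 n) :
    ∃ t ≤ n, p = subword L 0 t := by
  refine ⟨min p.length n, min_le_right _ _, (List.prefix_iff_eq_take.1 hp).trans ?_⟩
  simp only [subword, List.Ico.zero_bot, ← List.map_take, List.take_range]

variable {L}

theorem subword_add_period {n : ℕ} (hL : Function.Periodic L n) (s t : ℕ) :
    subword L (s + n) (t + n) = subword L s t := by
  rw [subword, ← List.Ico.map_add, List.map_map, subword]
  refine List.map_congr_left fun x _ => ?_
  rw [Function.comp_apply, Nat.add_comm, hL]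

end Subword

/-- Every point of `[s, t)` is matched by `q` with a point of `[s, t)`. -/
def ClosedOn (q : ℕ → ℕ → Prop) (s t : ℕ) : Prop :=
  ∀ x ∈ Set.Ico s t, ∃ y ∈ Set.Ico s t, q x y

/-- The point `x` is unmatched or is the left end of a pair of the matching `q`. -/
def Opens (q : ℕ → ℕ → Prop) (x : ℕ) : Prop :=
  ∀ y < x, ¬ q x y

/-- A matching of points of `ℕ` by nested parentheses: no two pairs cross, and no pair encloses an
unmatched point. -/
structure IsNested (q : ℕ → ℕ → Prop) : Prop where
  symm : ∀ {x y}, q x y → q y x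
  irrefl : ∀ x, ¬ q x x
  unique : ∀ {x y z}, q x y → q x z → y = z
  closedOn : ∀ {r s}, r < s → q r s → ClosedOn q (r + 1) s

theorem closedOn_of_le {q : ℕ → ℕ → Prop} {s t : ℕ} (h : t ≤ s) : ClosedOn q s t :=
  fun _ hx => absurd (hx.1.trans_lt hx.2) h.not_gt

theorem ClosedOn.union {q : ℕ → ℕ → Prop} {r s t : ℕ} (hrs : r ≤ s) (hst : s ≤ t)
    (h : ClosedOn q r s) (h' : ClosedOn q s t) : ClosedOn q r t := by
  rintro x ⟨hrx, hxt⟩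
  rcases lt_or_ge x s with hxs | hsx
  · obtain ⟨y, hy, hxy⟩ := h x ⟨hrx, hxs⟩
    exact ⟨y, Set.Ico_subset_Ico_right hst hy, hxy⟩
  · obtain ⟨y, hy, hxy⟩ := h' x ⟨hsx, hxt⟩
    exact ⟨y, Set.Ico_subset_Ico_left hrs hy, hxy⟩

namespace IsNested

variable {q : ℕ → ℕ → Prop} {r s t : ℕ}

theorem opens_of_lt (hq : IsNested q) (hrs : r < s) (h : q r s) : Opens q r :=
  fun _ hyr hry => (hyr.trans hrs).ne (hq.unique hry h)

theorem closedOn_pair (hq : IsNested q) (hrs : r < s) (h : q r s) : ClosedOn q r (s + 1) := by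
  rintro x ⟨hrx, hxs⟩
  rcases hrx.eq_or_lt with rfl | hrx
  · exact ⟨s, ⟨hrs.le, s.lt_succ_self⟩, h⟩
  rcases (Nat.le_of_lt_succ hxs).eq_or_lt with rfl | hxs
  · exact ⟨r, ⟨le_rfl, hrs.trans x.lt_succ_self⟩, hq.symm h⟩
  · obtain ⟨y, hy, hxy⟩ := hq.closedOn hrs h x ⟨hrx, hxs⟩
    exact ⟨y, ⟨(Nat.le_succ r).trans hy.1, hy.2.trans s.lt_succ_self⟩, hxy⟩

theorem closedOn_right (hq : IsNested q) (hrs : r ≤ s) (hrt : ClosedOn q r t)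
    (h : ClosedOn q r s) : ClosedOn q s t := by
  rintro x ⟨hsx, hxt⟩
  obtain ⟨y, ⟨hry, hyt⟩, hxy⟩ := hrt x ⟨hrs.trans hsx, hxt⟩
  refine ⟨y, ⟨?_, hyt⟩, hxy⟩
  by_contra! hys
  obtain ⟨z, hz, hyz⟩ := h y ⟨hry, hys⟩
  exact (hz.2.trans_le hsx).ne (hq.unique hyz (hq.symm hxy))

/-- The top of the stack of pending left ends and unmatched points, after reading `[0, t)`. -/
theorem exists_opens_closedOn (hq : IsNested q) (h0 : ∀ y, ¬ q 0 y) (ht : 0 < t) :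
    ∃ z < t, Opens q z ∧ ClosedOn q (z + 1) t := by
  induction t using Nat.strong_induction_on with
  | _ t ih =>
  obtain ⟨m, rfl⟩ := Nat.exists_eq_succ_of_ne_zero ht.ne'
  by_cases hm : Opens q m
  · exact ⟨m, m.lt_succ_self, hm, closedOn_of_le le_rfl⟩
  unfold Opens at hm
  push Not at hm
  obtain ⟨r, hrm, hmr⟩ := hm
  have hr : 0 < r := Nat.pos_of_ne_zero fun hr => h0 m (hr ▸ hq.symm hmr)
  obtain ⟨z, hzr, hz, hclosed⟩ := ih r (hrm.trans m.lt_succ_self) hr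
  have hpair := hq.closedOn_pair hrm (hq.symm hmr)
  exact ⟨z, hzr.trans (hrm.trans m.lt_succ_self), hz,
    hclosed.union hzr (hrm.trans m.lt_succ_self).le hpair⟩

theorem mk_subword_eq_one {N : ℕ} {L : ℕ → Letter N} (hq : IsNested q)
    (hL : ∀ {x y}, q x y → L x = linv (L y)) {s t : ℕ} (h : ClosedOn q s t) :
    FreeGroup.mk (subword L s t) = 1 := by
  rcases le_or_gt t s with hts | hst
  · rw [subword, List.Ico.eq_nil_of_le hts, List.map_nil, FreeGroup.one_eq_mk]
  obtain ⟨r, ⟨hsr, hrt⟩, hsr'⟩ := h s ⟨le_rfl, hst⟩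
  have hlt : s < r := hsr.lt_of_ne fun e => hq.irrefl s (e ▸ hsr')
  have inner := mk_subword_eq_one hq hL (hq.closedOn hlt hsr')
  have outer := mk_subword_eq_one hq hL
    (hq.closedOn_right (Nat.le_succ_of_le hsr) h (hq.closedOn_pair hlt hsr'))
  rw [← subword_append L (Nat.le_succ_of_le hsr) hrt, subword_succ L hsr, subword_eq_cons L hlt,
    ← List.singleton_append, ← FreeGroup.mul_mk, ← FreeGroup.mul_mk, ← FreeGroup.mul_mk,
    inner, outer, hL hsr', mk_singleton_linv, mul_one, mul_one, inv_mul_cancel]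
termination_by t - s

end IsNested

/-- The word `L 0, …, L (n - 1)`, continued periodically, with a nested matching `q` that leaves `0`
unmatched: what is seen of an admissible half-pairing when reading from a through string. Since `q`
does not match `n`, the wrap-around instance of admissibility is the case `t = n` of `ne_linv`. -/
structure IsAdmissibleReading {N : ℕ} (n : ℕ) (L : ℕ → Letter N) (q : ℕ → ℕ → Prop) : Prop
    extends IsNested q where
  periodic : Function.Periodic L n
  lt : ∀ {x y}, q x y → x < n
  not_zero : ∀ y, ¬ q 0 y
  eq_linv : ∀ {x y}, q x y → L x = linv (L y)
  ne_linv : ∀ {z t}, z < t → t ≤ n → Opens q z → Opens q t → ClosedOn q (z + 1) t →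
    L z ≠ linv (L t)

namespace IsAdmissibleReading

variable {N n : ℕ} {L : ℕ → Letter N} {q : ℕ → ℕ → Prop}

theorem mk_subword_eq_of_closedOn (H : IsAdmissibleReading n L q) {s t : ℕ} (hst : s ≤ t)
    (h : ClosedOn q s t) : FreeGroup.mk (subword L 0 t) = FreeGroup.mk (subword L 0 s) := by
  rw [← subword_append L s.zero_le hst, ← FreeGroup.mul_mk, H.mk_subword_eq_one H.eq_linv h,
    mul_one]

theorem isReduced_reduce_append (H : IsAdmissibleReading n L q) {t : ℕ} (htn : t ≤ n)
    (ht : Opens q t) : FreeGroup.IsReduced (FreeGroup.reduce (subword L 0 t) ++ [L t]) := by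
  induction t using Nat.strong_induction_on with
  | _ t ih =>
  rcases t.eq_zero_or_pos with rfl | hpos
  · rw [subword_self]
    exact FreeGroup.IsReduced.singleton
  obtain ⟨z, hzt, hz, hclosed⟩ := H.exists_opens_closedOn H.not_zero hpos
  have hzred := ih z hzt (hzt.le.trans htn) hz
  have htop : FreeGroup.reduce (subword L 0 t) = FreeGroup.reduce (subword L 0 z) ++ [L z] := by
    rw [← FreeGroup.toWord_mk, H.mk_subword_eq_of_closedOn hzt hclosed, FreeGroup.toWord_mk,
      subword_succ L z.zero_le, ← FreeGroup.reduce_append_reduce_reduce,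
      FreeGroup.reduce_singleton, hzred.reduce_eq]
  have hcover : L t ≠ linv (L z) := fun h =>
    H.ne_linv hzt htn hz ht hclosed (by rw [h, linv_linv])
  refine (isReduced_reduce _).append FreeGroup.IsReduced.singleton fun a ha b hb => ?_
  obtain rfl : L z = a := by simpa [htop] using ha
  obtain rfl : L t = b := by simpa using hb
  exact ne_linv_iff.1 hcover

theorem reduce_subword_succ (H : IsAdmissibleReading n L q) {t : ℕ} (htn : t ≤ n)
    (ht : Opens q t) :
    FreeGroup.reduce (subword L 0 (t + 1)) = FreeGroup.reduce (subword L 0 t) ++ [L t] := by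
  rw [← (H.isReduced_reduce_append htn ht).reduce_eq, subword_succ L t.zero_le,
    ← FreeGroup.reduce_append_reduce_reduce, FreeGroup.reduce_singleton]

theorem neverReturns (H : IsAdmissibleReading n L q) : NeverReturns (subword L 0 n) := by
  intro p hp hne hone
  obtain ⟨t, htn, rfl⟩ := exists_eq_subword_of_isPrefix L hp
  have ht : 0 < t := Nat.pos_of_ne_zero fun ht => hne (ht ▸ subword_self L 0)
  obtain ⟨z, hzt, hz, hclosed⟩ := H.exists_opens_closedOn H.not_zero ht
  rw [H.mk_subword_eq_of_closedOn hzt hclosed, ← FreeGroup.toWord_eq_nil_iff, FreeGroup.toWord_mk,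
    H.reduce_subword_succ (hzt.le.trans htn) hz] at hone
  exact List.append_ne_nil_of_right_ne_nil _ (List.cons_ne_nil _ _) hone

theorem goodReduction (H : IsAdmissibleReading n L q) (hn : 0 < n) :
    GoodReduction (subword L 0 n) := by
  refine goodReduction_iff.2 ⟨H.neverReturns, isReduced_reduce _, fun a ha b hb => ?_⟩
  have hLn : Opens q n := fun y _ hny => (H.lt hny).false
  rw [H.neverReturns.head?_reduce, subword_eq_cons L hn, ← H.periodic.eq] at hb
  exact (List.isChain_append.1 (H.isReduced_reduce_append le_rfl hLn)).2.2 a ha b hb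

theorem not_goodReduction_of_left (H : IsAdmissibleReading n L q) {j s : ℕ} (hjs : j < s)
    (h : q j s) : ¬ GoodReduction (subword L j (j + n)) := by
  intro hgood
  have hs : s + 1 ≤ j + n := (H.lt (H.symm h)).trans_le (Nat.le_add_left n j)
  refine (goodReduction_iff.1 hgood).1 (subword L j (s + 1)) ?_ ?_
    (H.mk_subword_eq_one H.eq_linv (H.closedOn_pair hjs h))
  · exact ⟨subword L (s + 1) (j + n), subword_append L (Nat.le_succ_of_le hjs.le) hs⟩
  · rw [subword_eq_cons L (Nat.lt_succ_of_lt hjs)]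
    exact List.cons_ne_nil _ _

/-- The part read before `j` reduces to a word ending in `L s`, which cancels `L j`. -/
theorem not_goodReduction_of_right (H : IsAdmissibleReading n L q) {j s : ℕ} (hsj : s < j)
    (h : q s j) : ¬ GoodReduction (subword L j (j + n)) := by
  intro hgood
  have hjn : j < n := H.lt (H.symm h)
  have hrotate : subword L j (j + n) = subword L j n ++ subword L 0 j := by
    rw [← subword_add_period H.periodic 0 j, Nat.zero_add,
      subword_append L hjn.le (Nat.le_add_left n j)]
  have hbefore : FreeGroup.reduce (subword L 0 j) = FreeGroup.reduce (subword L 0 s) ++ [L s] := by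
    rw [← FreeGroup.toWord_mk, H.mk_subword_eq_of_closedOn hsj (H.closedOn hsj h),
      FreeGroup.toWord_mk, H.reduce_subword_succ (hsj.trans hjn).le (H.opens_of_lt hsj h)]
  have hstart := H.goodReduction (j.zero_le.trans_lt hjn)
  rw [← subword_append L j.zero_le hjn.le, goodReduction_iff] at hstart
  rw [hrotate, goodReduction_iff] at hgood
  have hred := isReduced_reduce_append_reduce_rotate hstart.1 hgood.1 hstart.2 hgood.2
  have hlast : L s ∈ (FreeGroup.reduce (subword L 0 j)).getLast? := by
    rw [hbefore, List.getLast?_concat]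
    rfl
  have hhead : L j ∈ (FreeGroup.reduce (subword L j n ++ subword L 0 j)).head? := by
    rw [hgood.1.head?_reduce, subword_eq_cons L hjn]
    rfl
  have hcancel := (List.isChain_append.1 hred).2.2 (L s) hlast (L j) hhead
  exact ne_linv_iff.2 hcancel (H.eq_linv (H.symm h))

theorem not_goodReduction (H : IsAdmissibleReading n L q) {j s : ℕ} (h : q j s) :
    ¬ GoodReduction (subword L j (j + n)) := by
  rcases lt_trichotomy j s with hjs | rfl | hsj
  · exact H.not_goodReduction_of_left hjs h
  · exact absurd h (H.irrefl j)
  · exact H.not_goodReduction_of_right hsj (H.symm h)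

end IsAdmissibleReading

/-! ### Cutting the circle open -/

section Cycle

variable {n : ℕ}

theorem val_iterate_cnext (a : Fin n) (x : ℕ) : (cnext^[x] a).val = (a.val + x) % n := by
  induction x with
  | zero => exact (Nat.mod_eq_of_lt a.isLt).symm
  | succ x ih =>
    rw [Function.iterate_succ_apply', ← Nat.add_assoc, ← Nat.mod_add_mod, ← ih]
    rfl

theorem iterate_cnext_add_self (a : Fin n) (x : ℕ) : cnext^[x + n] a = cnext^[x] a := by
  ext
  rw [val_iterate_cnext, val_iterate_cnext, ← Nat.add_assoc, Nat.add_mod_right]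

theorem iterate_cnext_inj (a : Fin n) {x y : ℕ} (hx : x < n) (hy : y < n) :
    cnext^[x] a = cnext^[y] a ↔ x = y := by
  refine ⟨fun h => ?_, fun h => h ▸ rfl⟩
  rw [Fin.ext_iff, val_iterate_cnext, val_iterate_cnext] at h
  exact (Nat.ModEq.add_left_cancel' a.val h).eq_of_lt_of_lt hx hy

theorem iterate_cnext_csub (x a : Fin n) : cnext^[csub x a] a = x := by
  have ha : a.val ≤ x.val + n := a.isLt.le.trans (Nat.le_add_left n x.val)
  ext
  rw [val_iterate_cnext, csub, Nat.add_mod_mod, Nat.add_sub_cancel' ha, Nat.add_mod_right,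
    Nat.mod_eq_of_lt x.isLt]

theorem exists_iterate_cnext_eq (a i : Fin n) : ∃ x < n, cnext^[x] a = i :=
  ⟨csub i a, (csub i a).isLt, iterate_cnext_csub i a⟩

theorem val_csub_iterate_cnext (a : Fin n) {i x : ℕ} (hix : i ≤ x) (hxi : x < i + n) :
    (csub (cnext^[x] a) (cnext^[i] a)).val = x - i := by
  have hlt : x - i < n := Nat.sub_lt_left_of_lt_add hix hxi
  rw [← iterate_cnext_inj (cnext^[i] a) (csub _ _).isLt hlt, iterate_cnext_csub,
    ← Function.iterate_add_apply, Nat.sub_add_cancel hix]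

theorem inCyc_iterate_cnext_iff (a : Fin n) {i j x : ℕ} (hij : i ≤ j) (hj : j < n) (hx : x < n) :
    InCyc (cnext^[i] a) (cnext^[j] a) (cnext^[x] a) ↔ i ≤ x ∧ x ≤ j := by
  change (csub (cnext^[x] a) (cnext^[i] a)).val ≤ (csub (cnext^[j] a) (cnext^[i] a)).val ↔ _
  rw [val_csub_iterate_cnext a hij (by omega)]
  rcases le_or_gt i x with hix | hxi
  · rw [val_csub_iterate_cnext a hix (by omega)]
    omega
  · rw [← iterate_cnext_add_self a x, val_csub_iterate_cnext a (by omega) (by omega)]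
    omega

theorem val_cnext_of_lt {i : Fin n} (h : i.val + 1 < n) : (cnext i).val = i.val + 1 :=
  Nat.mod_eq_of_lt h

theorem val_cnext_of_eq {i : Fin n} (h : i.val + 1 = n) : (cnext i).val = 0 :=
  (congrArg (· % n) h).trans (Nat.mod_self n)

theorem cprev_cnext (i : Fin n) : cprev (cnext i) = i := by
  ext
  change ((cnext i).val + n - 1) % n = i.val
  rcases (Nat.succ_le_of_lt i.isLt).eq_or_lt with hlast | hlt
  · rw [val_cnext_of_eq hlast, Nat.zero_add, Nat.sub_eq_of_eq_add hlast.symm,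
      Nat.mod_eq_of_lt i.isLt]
  · rw [val_cnext_of_lt hlt, Nat.add_right_comm, Nat.add_sub_cancel, Nat.add_mod_right,
      Nat.mod_eq_of_lt i.isLt]

theorem ofFn_cadd_iterate_cnext {α : Type*} (w : Fin n → α) (a : Fin n) (j : ℕ) :
    List.ofFn (fun x => w (cadd (cnext^[j] a) x)) =
      subword (fun x => w (cnext^[x] a)) j (j + n) := by
  refine List.ext_getElem (by simp [subword]) fun x hx _ => ?_
  have hpos : cadd (cnext^[j] a) ⟨x, by simpa using hx⟩ = cnext^[j + x] a := by
    ext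
    change ((cnext^[j] a).val + x) % n = _
    rw [val_iterate_cnext, val_iterate_cnext, Nat.mod_add_mod, add_assoc]
  simp only [subword, List.getElem_ofFn, List.getElem_map, List.Ico, List.getElem_range', hpos,
    one_mul]

theorem NonCrossingRel.comp_cnext {r : Fin n → Fin n → Prop} (hr : Equivalence r)
    (h : NonCrossingRel r) : NonCrossingRel (fun x y => r (cnext x) (cnext y)) := by
  intro i₁ i₂ i₃ i₄ h₁₂ h₂₃ h₃₄ h₁₃ h₂₄
  have h₁ : (cnext i₁).val = i₁.val + 1 := val_cnext_of_lt (by omega)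
  have h₂ : (cnext i₂).val = i₂.val + 1 := val_cnext_of_lt (by omega)
  have h₃ : (cnext i₃).val = i₃.val + 1 := val_cnext_of_lt (by omega)
  have next₁₂ : cnext i₁ < cnext i₂ := by omega
  have next₂₃ : cnext i₂ < cnext i₃ := by omega
  rcases (Nat.succ_le_of_lt i₄.isLt).eq_or_lt with hlast | hlt
  · have h₄ := val_cnext_of_eq hlast
    have next₄₁ : cnext i₄ < cnext i₁ := by omega
    exact hr.trans (hr.symm (h _ _ _ _ next₄₁ next₁₂ next₂₃ (hr.symm h₂₄) h₁₃)) (hr.symm h₂₄)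
  · have h₄ := val_cnext_of_lt hlt
    exact h _ _ _ _ next₁₂ next₂₃ (by omega) h₁₃ h₂₄

theorem NonCrossingRel.comp_iterate_cnext {r : Fin n → Fin n → Prop} (hr : Equivalence r)
    (h : NonCrossingRel r) (k : ℕ) :
    NonCrossingRel (fun x y => r (cnext^[k] x) (cnext^[k] y)) := by
  induction k with
  | zero => exact h
  | succ k ih => exact ih.comp_cnext (hr.comap _)

theorem NonCrossingRel.rel_iterate_cnext {r : Fin n → Fin n → Prop} (hr : Equivalence r)
    (h : NonCrossingRel r) (a : Fin n) {x y z u : ℕ} (hxy : x < y) (hyz : y < z) (hzu : z < u)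
    (hu : u < n) (hxz : r (cnext^[x] a) (cnext^[z] a)) (hyu : r (cnext^[y] a) (cnext^[u] a)) :
    r (cnext^[x] a) (cnext^[y] a) := by
  have hpos {x : ℕ} (hx : x < n) : cnext^[x] a = cnext^[a.val] ⟨x, hx⟩ := by
    ext
    rw [val_iterate_cnext, val_iterate_cnext, add_comm]
  have hz := hzu.trans hu
  have hy := hyz.trans hz
  rw [hpos (hxy.trans hy), hpos hz] at hxz
  rw [hpos hy, hpos hu] at hyu
  rw [hpos (hxy.trans hy), hpos hy]
  exact h.comp_iterate_cnext hr a _ _ _ _ hxy hyz hzu hxz hyu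

end Cycle

section HalfPairing

variable {n : ℕ}

theorem rel_iff {P : Finpartition (Finset.univ : Finset (Fin n))} {x y : Fin n} :
    Rel P x y ↔ P.part x = P.part y := by
  rw [← P.mem_part_iff_part_eq_part (Finset.mem_univ x) (Finset.mem_univ y),
    P.mem_part_iff_exists]
  simp only [Rel, and_comm]

theorem isSingleton_iff {P : Finpartition (Finset.univ : Finset (Fin n))} {x : Fin n} :
    IsSingleton P x ↔ (P.part x).card = 1 := by
  have hx := Finset.mem_univ x
  refine ⟨?_, fun h => ⟨P.part x, P.part_mem.2 hx, P.mem_part hx, h⟩⟩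
  rintro ⟨B, hB, hxB, hcard⟩
  rwa [P.part_eq_of_mem hB hxB]

theorem equivalence_rel (P : Finpartition (Finset.univ : Finset (Fin n))) :
    Equivalence (Rel P) where
  refl _ := rel_iff.2 rfl
  symm h := rel_iff.2 (rel_iff.1 h).symm
  trans h h' := rel_iff.2 ((rel_iff.1 h).trans (rel_iff.1 h'))

theorem IsSingleton.of_rel {P : Finpartition (Finset.univ : Finset (Fin n))} {x y : Fin n}
    (hx : IsSingleton P x) (h : Rel P x y) : IsSingleton P y := by
  rwa [isSingleton_iff, ← rel_iff.1 h, ← isSingleton_iff]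

theorem equivalence_relTilde (P : Finpartition (Finset.univ : Finset (Fin n))) :
    Equivalence (RelTilde P) where
  refl x := Or.inl ((equivalence_rel P).refl x)
  symm := Or.imp (equivalence_rel P).symm And.symm
  trans := by
    rintro x y z (hxy | ⟨hx, hy⟩) (hyz | ⟨hy', hz⟩)
    · exact Or.inl ((equivalence_rel P).trans hxy hyz)
    · exact Or.inr ⟨hy'.of_rel ((equivalence_rel P).symm hxy), hz⟩
    · exact Or.inr ⟨hx, hy.of_rel hyz⟩
    · exact Or.inr ⟨hx, hz⟩

variable {π : HalfPairing n}

theorem Pairs.symm {x y : Fin n} (h : Pairs π x y) : Pairs π y x :=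
  ⟨h.1.symm, (equivalence_rel π.P).symm h.2⟩

theorem Pairs.unique {x y z : Fin n} (h : Pairs π x y) (h' : Pairs π x z) : y = z := by
  obtain ⟨hxy, B, hB, hx, hy⟩ := h
  obtain ⟨hxz, C, hC, hx', hz⟩ := h'
  obtain rfl := π.P.eq_of_mem_parts hB hC hx hx'
  by_contra hyz
  exact (π.card_le B hB).not_gt (Finset.two_lt_card.2 ⟨x, hx, y, hy, z, hz, hxy, hxz, hyz⟩)

theorem Pairs.not_isSingleton {x y : Fin n} (h : Pairs π x y) : ¬ IsSingleton π.P x := by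
  rintro ⟨B, hB, hx, hcard⟩
  obtain ⟨hxy, C, hC, hx', hy⟩ := h
  obtain rfl := π.P.eq_of_mem_parts hB hC hx hx'
  exact hxy (Finset.card_le_one.1 hcard.le x hx y hy)

theorem exists_pairs {x : Fin n} (hx : ¬ IsSingleton π.P x) : ∃ y, Pairs π x y := by
  obtain ⟨B, hB, hxB⟩ := π.P.exists_mem (Finset.mem_univ x)
  have hcard : 1 < B.card :=
    (Finset.one_le_card.2 ⟨x, hxB⟩).lt_of_ne fun h => hx ⟨B, hB, hxB, h.symm⟩
  obtain ⟨y, hy, hyx⟩ := Finset.exists_mem_ne hcard x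
  exact ⟨y, hyx.symm, B, hB, hxB, hy⟩

variable (π) in
/-- The pairs of `π` in the positions counted from `a`, which cuts the circle open into `[0, n)`. -/
def CutPairs (a : Fin n) (x y : ℕ) : Prop :=
  x < n ∧ y < n ∧ Pairs π (cnext^[x] a) (cnext^[y] a)

variable {a : Fin n}

theorem CutPairs.symm {x y : ℕ} (h : CutPairs π a x y) : CutPairs π a y x :=
  ⟨h.2.1, h.1, h.2.2.symm⟩

theorem CutPairs.unique {x y z : ℕ} (h : CutPairs π a x y) (h' : CutPairs π a x z) : y = z :=
  (iterate_cnext_inj a h.2.1 h'.2.1).1 (h.2.2.unique h'.2.2)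

theorem exists_cutPairs {x : ℕ} (hxn : x < n) (hx : ¬ IsSingleton π.P (cnext^[x] a)) :
    ∃ y, CutPairs π a x y := by
  obtain ⟨s, hs⟩ := exists_pairs hx
  obtain ⟨y, hy, rfl⟩ := exists_iterate_cnext_eq a s
  exact ⟨y, hxn, hy, hs⟩

theorem not_cutPairs_zero (ha : IsSingleton π.P a) (y : ℕ) : ¬ CutPairs π a 0 y :=
  fun h => h.2.2.not_isSingleton ha

/-- Otherwise the merged block of singletons, which contains `a`, would cross the pair. -/
theorem not_isSingleton_of_cutPairs (ha : IsSingleton π.P a) {x y z : ℕ} (hxy : x < y)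
    (hyz : y < z) (h : CutPairs π a x z) : ¬ IsSingleton π.P (cnext^[y] a) := by
  obtain ⟨-, hz, hpair⟩ := h
  intro hy
  rcases x.eq_zero_or_pos with rfl | hx
  · exact hpair.not_isSingleton ha
  rcases π.nc_tilde.rel_iterate_cnext (equivalence_relTilde π.P) a hx hxy hyz hz
    (Or.inr ⟨ha, hy⟩) (Or.inl hpair.2) with h | h
  · exact hpair.not_isSingleton (ha.of_rel h)
  · exact hpair.not_isSingleton h.2

theorem not_cutPairs_crossing {x y z u : ℕ} (hxy : x < y) (hyz : y < z) (hzu : z < u)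
    (hxz : CutPairs π a x z) : ¬ CutPairs π a y u := by
  rintro ⟨hy, hu, hyu⟩
  obtain ⟨hx, hz, hxz⟩ := hxz
  have hrel := π.nc.rel_iterate_cnext (equivalence_rel π.P) a hxy hyz hzu hu hxz.2 hyu.2
  have hne : cnext^[x] a ≠ cnext^[y] a := fun h => hxy.ne ((iterate_cnext_inj a hx hy).1 h)
  exact hyz.ne ((iterate_cnext_inj a hy hz).1 (Pairs.unique ⟨hne, hrel⟩ hxz))

theorem isNested_cutPairs (ha : IsSingleton π.P a) : IsNested (CutPairs π a) where
  symm := CutPairs.symm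
  irrefl _ h := h.2.2.1 rfl
  unique := CutPairs.unique
  closedOn := by
    rintro r s hrs h x ⟨hrx, hxs⟩
    obtain ⟨y, hxy⟩ :=
      exists_cutPairs (hxs.trans h.2.1) (not_isSingleton_of_cutPairs ha hrx hxs h)
    have hyr : y ≠ r := by
      rintro rfl
      exact hxs.ne (hxy.symm.unique h)
    have hys : y ≠ s := by
      rintro rfl
      exact (Nat.lt_of_succ_le hrx).ne (h.symm.unique hxy.symm)
    have hry : r ≤ y := not_lt.1 fun hyr => not_cutPairs_crossing hyr hrx hxs hxy.symm h
    have hsy : y ≤ s := not_lt.1 fun hsy => not_cutPairs_crossing hrx hxs hsy h hxy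
    exact ⟨y, ⟨hry.lt_of_ne hyr.symm, hsy.lt_of_ne hys⟩, hxy⟩

theorem outOriented_of_opens (ha : IsSingleton π.P a) {x : ℕ} (hxn : x < n)
    (hx : Opens (CutPairs π a) x) : OutOriented π (cnext^[x] a) := by
  by_cases hsing : IsSingleton π.P (cnext^[x] a)
  · exact Or.inl hsing
  obtain ⟨s, hxs⟩ := exists_cutPairs hxn hsing
  refine Or.inr ⟨cnext^[s] a, hxs.2.2, fun i hi => ?_⟩
  obtain ⟨y, hyn, rfl⟩ := exists_iterate_cnext_eq a i
  have hle : x ≤ s := not_lt.1 fun hsx => hx s hsx hxs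
  obtain ⟨hxy, hys⟩ := (inCyc_iterate_cnext_iff a hle hxs.2.1 hyn).1 hi
  rcases hxy.eq_or_lt with rfl | hxy
  · exact hsing
  rcases hys.eq_or_lt with rfl | hys
  · exact hxs.2.2.symm.not_isSingleton
  · exact not_isSingleton_of_cutPairs ha hxy hys hxs

theorem covers_of_closedOn (ha : IsSingleton π.P a) {z t : ℕ} (hzt : z < t) (htn : t ≤ n)
    (hz : Opens (CutPairs π a) z) (ht : Opens (CutPairs π a) t)
    (hclosed : ClosedOn (CutPairs π a) (z + 1) t) : Covers π (cnext^[z] a) (cnext^[t] a) := by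
  have hout : OutOriented π (cnext^[t] a) := by
    rcases htn.eq_or_lt with rfl | htn
    · have hwrap := iterate_cnext_add_self a 0
      rw [Nat.zero_add] at hwrap
      exact hwrap ▸ Or.inl ha
    · exact outOriented_of_opens ha htn ht
  refine ⟨outOriented_of_opens ha (hzt.trans_le htn) hz, hout, ?_⟩
  obtain ⟨m, rfl⟩ := Nat.exists_eq_succ_of_ne_zero hzt.ne_bot
  rw [← Function.iterate_succ_apply' cnext z, Function.iterate_succ_apply' cnext m, cprev_cnext]
  rcases (Nat.le_of_lt_succ hzt).eq_or_lt with rfl | hzm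
  · exact Or.inl (Function.iterate_succ_apply' cnext z a).symm
  refine Or.inr fun i hi => ?_
  obtain ⟨x, hxn, rfl⟩ := exists_iterate_cnext_eq a i
  rw [inCyc_iterate_cnext_iff a hzm htn hxn] at hi
  obtain ⟨y, ⟨hzy, hym⟩, hxy⟩ := hclosed x ⟨hi.1, Nat.lt_succ_of_le hi.2⟩
  exact ⟨cnext^[y] a, hxy.2.2.1.symm,
    (inCyc_iterate_cnext_iff a hzm htn hxy.2.1).2 ⟨hzy, Nat.le_of_lt_succ hym⟩, hxy.2.2⟩

theorem isAdmissibleReading {N : ℕ} {w : Fin n → Letter N} (hπ : Admissible w π)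
    (ha : IsSingleton π.P a) :
    IsAdmissibleReading n (fun x => w (cnext^[x] a)) (CutPairs π a) where
  toIsNested := isNested_cutPairs ha
  periodic x := congrArg w (iterate_cnext_add_self a x)
  lt h := h.1
  not_zero := not_cutPairs_zero ha
  eq_linv h := hπ.1.1 _ _ h.2.2
  ne_linv hzt htn hz ht hclosed := hπ.2 _ _ (covers_of_closedOn ha hzt htn hz ht hclosed)

end HalfPairing

/-- Let `w` be a word whose cyclic reduction has length `k ≥ 1` and let `π` be
the (unique) `w`-admissible half-pairing.  Then the cyclic permutation of `w`
starting at position `i` has good reduction iff `{i}` is a through string of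
`π`.  (In particular, taking `i = 0`: if `w` itself has good reduction then
the first position is a through string.) -/
theorem goodReduction_iff_throughString (N n k : ℕ) (hk : 1 ≤ k)
    (w : Fin n → Letter N) (v : List (Letter N))
    (hv : CycReducesTo (List.ofFn w) v) (hvc : CycReduced v) (hvk : v.length = k)
    (π : HalfPairing n) (hπ : Admissible w π) (i : Fin n) :
    GoodReduction (List.ofFn (fun j => w (cadd i j))) ↔ IsSingleton π.P i := by
  constructor
  · intro hgood
    by_contra hi
    obtain ⟨a, ha⟩ := π.exists_singleton
    obtain ⟨s, his⟩ := exists_pairs hi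
    obtain ⟨j, hj, rfl⟩ := exists_iterate_cnext_eq a i
    obtain ⟨s, hs, rfl⟩ := exists_iterate_cnext_eq a s
    rw [ofFn_cadd_iterate_cnext] at hgood
    exact (isAdmissibleReading hπ ha).not_goodReduction ⟨hj, hs, his⟩ hgood
  · intro hi
    have hword := ofFn_cadd_iterate_cnext w i 0
    rw [Nat.zero_add] at hword
    rw [← Function.iterate_zero_apply cnext i, hword]
    exact (isAdmissibleReading hπ hi).goodReduction i.pos

end NCC
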